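/- Let f : V × V → W be an odd object of SSKE (i.e., f(V₀, V₀) = f(V₁, V₁) = 0) of dimension (m | n) with m, n ≥ 1 and rank (0 | mn), i.e., W₀ = 0 and dim W₁ = mn. Then L_f is a generalized Heisenberg Lie superalgebra (Z(L_f) = L_f² = 0 ⊕ W) of dimension (m | mn + n), i.e., dim (L_f)₀ = m and dim (L_f)₁ = mn + n, whose derived subalgebra has dimension (0 | mn). -/

import Mathlib

open TensorProduct

noncomputable section

/-- The sign `(−1)^{σ·τ}` (for degrees `σ τ : ℤ/2`) as an element of the field `F`. -/
def ssign (F : Type*) [Field F] (σ τ : ZMod 2) : F := (-1 : F) ^ (σ * τ).val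

variable {F V W L : Type*}

section Defs

variable [Field F] [AddCommGroup V] [Module F V] [AddCommGroup W] [Module F W]
  [AddCommGroup L] [Module F L]

/-- `f : V × V → W` is an object of the category `SSKE`: a grading-preserving
skew-supersymmetric bilinear map between superspaces whose image spans `W`. -/
structure IsSSKE (gV : ZMod 2 → Submodule F V) (gW : ZMod 2 → Submodule F W)
    (f : V →ₗ[F] V →ₗ[F] W) : Prop where
  internalV : DirectSum.IsInternal gV
  internalW : DirectSum.IsInternal gW
  grading : ∀ σ τ : ZMod 2, ∀ u ∈ gV σ, ∀ v ∈ gV τ, f u v ∈ gW (σ + τ)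
  skew : ∀ σ τ : ZMod 2, ∀ u ∈ gV σ, ∀ v ∈ gV τ, f u v = -(ssign F σ τ) • f v u
  span_eq_top : Submodule.span F {w : W | ∃ u v : V, f u v = w} = ⊤

/-- A subspace `U` of a superspace is graded: `U = (U ∩ V₀) ⊕ (U ∩ V₁)`. -/
def IsGradedSub (gV : ZMod 2 → Submodule F V) (U : Submodule F V) : Prop :=
  U = U ⊓ gV 0 ⊔ U ⊓ gV 1

/-- The subspace `X_g` of `V ⊗ W` (for the restriction of `g` to a subspace `U` of `V`),
spanned by all `(−1)^{|a||c|} a ⊗ g(b,c) + (−1)^{|b||a|} b ⊗ g(c,a) + (−1)^{|c||b|} c ⊗ g(a,b)`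
with `a, b, c` homogeneous elements of `U`. For `U = ⊤` this is `X_g` itself. -/
def XFr (gV : ZMod 2 → Submodule F V) (U : Submodule F V)
    (g : V →ₗ[F] V →ₗ[F] W) : Submodule F (V ⊗[F] W) :=
  Submodule.span F {z : V ⊗[F] W | ∃ σ τ ρ : ZMod 2, ∃ a ∈ U ⊓ gV σ, ∃ b ∈ U ⊓ gV τ,
    ∃ c ∈ U ⊓ gV ρ,
    z = ssign F σ ρ • (a ⊗ₜ[F] g b c) + ssign F τ σ • (b ⊗ₜ[F] g c a)
      + ssign F ρ τ • (c ⊗ₜ[F] g a b)}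

/-- The epicenter `Z*(g)` of (the restriction to a subspace `U` of) a
skew-supersymmetric bilinear map `g`: all `w = g(u,v)` with `u, v` homogeneous in `U`
such that `(−1)^{|x||v|} x ⊗ w ∈ X_g` for every homogeneous `x ∈ U`. -/
def Zstar (gV : ZMod 2 → Submodule F V) (U : Submodule F V)
    (g : V →ₗ[F] V →ₗ[F] W) : Set W :=
  {w : W | ∃ σ τ : ZMod 2, ∃ u ∈ U ⊓ gV σ, ∃ v ∈ U ⊓ gV τ, w = g u v ∧
    ∀ ρ : ZMod 2, ∀ x ∈ U ⊓ gV ρ, ssign F ρ τ • (x ⊗ₜ[F] w) ∈ XFr gV U g}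

/-- The subspace `U ⊗ T` of `V ⊗ W`. -/
def tensSpan (U : Submodule F V) (T : Submodule F W) : Submodule F (V ⊗[F] W) :=
  Submodule.span F {z : V ⊗[F] W | ∃ u ∈ U, ∃ t ∈ T, z = u ⊗ₜ[F] t}

/-- The bracket of the Lie superalgebra `L_f = V ⊕ W`:
`[(v,w),(v′,w′)] = (0, f(v,v′))`. -/
def superBracket (f : V →ₗ[F] V →ₗ[F] W) :
    (V × W) →ₗ[F] (V × W) →ₗ[F] (V × W) :=
  ((f.compl₂ (LinearMap.fst F V W)).compr₂ (LinearMap.inr F V W)).comp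
    (LinearMap.fst F V W)

/-- The derived subalgebra `L² `: the span of all brackets. -/
def derivedSub (B : L →ₗ[F] L →ₗ[F] L) : Submodule F L :=
  Submodule.span F {z : L | ∃ x y : L, z = B x y}

/-- The span of all brackets of elements of a subspace `P`. -/
def derivedOn (B : L →ₗ[F] L →ₗ[F] L) (P : Submodule F L) : Submodule F L :=
  Submodule.span F {z : L | ∃ x ∈ P, ∃ y ∈ P, z = B x y}

/-- The axioms of a Lie superalgebra: `L` with grading `gL`, an internal direct sum,
and a bilinear bracket `B` which preserves the grading and satisfies graded
skew-symmetry and the graded Jacobi identity. -/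
structure IsLieSuper (gL : ZMod 2 → Submodule F L) (B : L →ₗ[F] L →ₗ[F] L) : Prop where
  internal : DirectSum.IsInternal gL
  grading : ∀ σ τ : ZMod 2, ∀ x ∈ gL σ, ∀ y ∈ gL τ, B x y ∈ gL (σ + τ)
  skew : ∀ σ τ : ZMod 2, ∀ x ∈ gL σ, ∀ y ∈ gL τ, B x y = -(ssign F σ τ) • B y x
  jacobi : ∀ σ τ ρ : ZMod 2, ∀ x ∈ gL σ, ∀ y ∈ gL τ, ∀ z ∈ gL ρ,
    ssign F σ ρ • B x (B y z) + ssign F τ σ • B y (B z x)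
      + ssign F ρ τ • B z (B x y) = 0

end Defs

theorem aux_tmul_zero {F A B : Type*} [Field F] [AddCommGroup A] [Module F A]
    [AddCommGroup B] [Module F B] (a : A) (b : B) (h : a ⊗ₜ[F] b = 0) : a = 0 ∨ b = 0 := by
  by_contra! hc
  obtain ⟨ha, hb⟩ := hc
  have h1 : ∃ φ : Module.Dual F A, φ a ≠ 0 := by
    by_contra! hh
    exact ha ((Module.forall_dual_apply_eq_zero_iff F a).1 hh)
  have h2 : ∃ φ : Module.Dual F B, φ b ≠ 0 := by
    by_contra! hh
    exact hb ((Module.forall_dual_apply_eq_zero_iff F b).1 hh)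
  obtain ⟨φ, hφ⟩ := h1
  obtain ⟨ψ, hψ⟩ := h2
  have h3 := congrArg (LinearMap.mul' F F ∘ₗ TensorProduct.map φ ψ) h
  simp at h3
  tauto

theorem aux_finrank_prod {F A B : Type*} [Field F] [AddCommGroup A] [Module F A]
    [AddCommGroup B] [Module F B] [FiniteDimensional F A] [FiniteDimensional F B]
    (p : Submodule F A) (q : Submodule F B) :
    Module.finrank F ↥(p.prod q) = Module.finrank F p + Module.finrank F q := by
  let e : ↥(p.prod q) ≃ₗ[F] p × q :=
    { toFun := fun x => (⟨x.1.1, x.2.1⟩, ⟨x.1.2, x.2.2⟩)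
      invFun := fun y => ⟨(y.1.1, y.2.1), ⟨y.1.2, y.2.2⟩⟩
      map_add' := fun _ _ => rfl
      map_smul' := fun _ _ => rfl
      left_inv := fun _ => rfl
      right_inv := fun _ => rfl }
  rw [e.finrank_eq, Module.finrank_prod]

theorem aux_isCompl {F A : Type*} [Field F] [AddCommGroup A] [Module F A]
    (g : ZMod 2 → Submodule F A) (h : DirectSum.IsInternal g) : IsCompl (g 0) (g 1) := by
  refine h.isCompl (by decide) ?_
  ext x
  have hx : x = 0 ∨ x = 1 := by revert x; decide
  simpa using hx

/-- If `f` is an odd object of SSKE of dimension `(m | n)` with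
`m, n ≥ 1` and rank `(0 | mn)`, then `L_f` is a generalized Heisenberg Lie
superalgebra of dimension `(m | mn + n)` whose derived subalgebra has dimension
`(0 | mn)`. -/
theorem stmt6 [Field F] [AddCommGroup V] [Module F V] [AddCommGroup W] [Module F W]
    [FiniteDimensional F V] [FiniteDimensional F W] [Nontrivial V] [Nontrivial W]
    (hchar2 : (2 : F) ≠ 0) (hchar3 : (3 : F) ≠ 0)
    (gV : ZMod 2 → Submodule F V) (gW : ZMod 2 → Submodule F W)
    (f : V →ₗ[F] V →ₗ[F] W) (hf : IsSSKE gV gW f)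
    (hodd00 : ∀ u ∈ gV 0, ∀ v ∈ gV 0, f u v = 0)
    (hodd11 : ∀ u ∈ gV 1, ∀ v ∈ gV 1, f u v = 0)
    (m n : ℕ) (hm : 1 ≤ m) (hn : 1 ≤ n)
    (hV0 : Module.finrank F ↥(gV 0) = m) (hV1 : Module.finrank F ↥(gV 1) = n)
    (hW0 : gW 0 = ⊥) (hW1 : Module.finrank F ↥(gW 1) = m * n) :
    derivedSub (superBracket f) = (⊥ : Submodule F V).prod (⊤ : Submodule F W) ∧
    {z : V × W | ∀ x : V × W, superBracket f z x = 0}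
      = (derivedSub (superBracket f) : Set (V × W)) ∧
    Module.finrank F ↥((gV 0).prod (gW 0)) = m ∧
    Module.finrank F ↥((gV 1).prod (gW 1)) = m * n + n ∧
    Module.finrank F ↥(derivedSub (superBracket f) ⊓ (gV 0).prod (gW 0)) = 0 ∧
    Module.finrank F ↥(derivedSub (superBracket f) ⊓ (gV 1).prod (gW 1)) = m * n := by
  have hVc := aux_isCompl gV hf.internalV
  have hWc := aux_isCompl gW hf.internalW
  have hW1t : gW 1 = ⊤ := by
    have := hWc.sup_eq_top
    rwa [hW0, bot_sup_eq] at this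
  have hWd : Module.finrank F W = m * n := by
    rw [← hW1, hW1t, finrank_top]
  have hdec : ∀ v : V, ∃ a ∈ gV 0, ∃ b ∈ gV 1, a + b = v := fun v =>
    Submodule.mem_sup.1 (hVc.sup_eq_top ▸ Submodule.mem_top)
  let φ : (gV 0) ⊗[F] (gV 1) →ₗ[F] W :=
    TensorProduct.lift (f.domRestrict₁₂ (gV 0) (gV 1))
  have hφ : ∀ (a : gV 0) (b : gV 1), φ (a ⊗ₜ b) = f a b := fun a b => by
    simp only [φ, TensorProduct.lift.tmul]
    rfl
  have hsurj : Function.Surjective φ := by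
    rw [← LinearMap.range_eq_top, eq_top_iff, ← hf.span_eq_top, Submodule.span_le]
    rintro w ⟨u, v, rfl⟩
    obtain ⟨a, ha, b, hb, rfl⟩ := hdec u
    obtain ⟨c, hc, d, hd, rfl⟩ := hdec v
    have e : f (a + b) (c + d) = f a d + -(ssign F 1 0) • f c b := by
      rw [← hf.skew 1 0 b hb c hc]
      simp [hodd00 a ha c hc, hodd11 b hb d hd]
    rw [e]
    refine Submodule.add_mem _ ⟨(⟨a, ha⟩ : gV 0) ⊗ₜ (⟨d, hd⟩ : gV 1), hφ _ _⟩
      (Submodule.smul_mem _ _ ⟨(⟨c, hc⟩ : gV 0) ⊗ₜ (⟨b, hb⟩ : gV 1), hφ _ _⟩)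
  have hinj : Function.Injective φ := by
    refine (LinearMap.injective_iff_surjective_of_finrank_eq_finrank ?_).2 hsurj
    rw [Module.finrank_tensorProduct, hV0, hV1, hWd]
  have hnd : ∀ a ∈ gV 0, ∀ b ∈ gV 1, f a b = 0 → a = 0 ∨ b = 0 := by
    intro a ha b hb h
    have h0 : (⟨a, ha⟩ : gV 0) ⊗ₜ[F] (⟨b, hb⟩ : gV 1) = 0 :=
      hinj (by rw [hφ, map_zero]; exact h)
    rcases aux_tmul_zero _ _ h0 with h | h
    · exact Or.inl (congrArg Subtype.val h)
    · exact Or.inr (congrArg Subtype.val h)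
  have hB : ∀ x y, superBracket f x y = (0, f x.1 y.1) := fun x y => rfl
  have hder : derivedSub (superBracket f) = (⊥ : Submodule F V).prod (⊤ : Submodule F W) := by
    apply le_antisymm
    · refine Submodule.span_le.2 ?_
      rintro z ⟨x, y, rfl⟩
      rw [hB]
      exact ⟨Submodule.zero_mem _, Submodule.mem_top⟩
    · have h1 : (⊤ : Submodule F W) ≤
          (derivedSub (superBracket f)).comap (LinearMap.inr F V W) := by
        rw [← hf.span_eq_top, Submodule.span_le]
        rintro w ⟨u, v, rfl⟩
        exact Submodule.subset_span ⟨(u, 0), (v, 0), rfl⟩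
      rintro ⟨v, w⟩ ⟨hv, -⟩
      obtain rfl : v = 0 := hv
      exact h1 (Submodule.mem_top : w ∈ ⊤)
  have hn0 : ∃ a ∈ gV 0, a ≠ 0 := by
    refine Submodule.exists_mem_ne_zero_of_ne_bot fun h => ?_
    rw [h, finrank_bot] at hV0
    omega
  have hn1 : ∃ a ∈ gV 1, a ≠ 0 := by
    refine Submodule.exists_mem_ne_zero_of_ne_bot fun h => ?_
    rw [h, finrank_bot] at hV1
    omega
  refine ⟨hder, ?_, ?_, ?_, ?_, ?_⟩
  · rw [hder]
    ext ⟨v, w⟩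
    simp only [Set.mem_ofPred_eq, SetLike.mem_coe, Submodule.mem_prod, Submodule.mem_bot,
      Submodule.mem_top, and_true, hB]
    constructor
    · intro h
      have h' : ∀ x, f v x = 0 := fun x => congrArg Prod.snd (h (x, 0))
      obtain ⟨a, ha, b, hb, rfl⟩ := hdec v
      obtain ⟨c, hc, hc0⟩ := hn0
      obtain ⟨d, hd, hd0⟩ := hn1
      have e1 := h' d
      rw [map_add, LinearMap.add_apply, hodd11 b hb d hd, add_zero] at e1
      have e2 := h' c
      rw [map_add, LinearMap.add_apply, hodd00 a ha c hc, zero_add] at e2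
      have e3 : f c b = 0 := by rw [hf.skew 0 1 c hc b hb, e2, smul_zero]
      rw [(hnd a ha d hd e1).resolve_right hd0, (hnd c hc b hb e3).resolve_left hc0, add_zero]
    · rintro rfl x
      simp
  · rw [aux_finrank_prod, hV0, hW0, finrank_bot, add_zero]
  · rw [aux_finrank_prod, hV1, hW1, add_comm]
  · rw [hder, Submodule.prod_inf_prod, aux_finrank_prod, hW0, bot_inf_eq, inf_bot_eq,
      finrank_bot, finrank_bot]
  · rw [hder, Submodule.prod_inf_prod, aux_finrank_prod, bot_inf_eq, top_inf_eq,
      finrank_bot, hW1, zero_add]
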